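/- For every c > 0 there exist C > 0 and n₀ ∈ ℕ, with C depending only on c, such that for every n ≥ n₀, almost surely on the event {M_n > 1/27 − c/γ_n} one has |M_{n+1} − E[M_{n+1} | 𝔉_n]| < C/γ_n^{3/2}. -/

import Mathlib

open MeasureTheory ProbabilityTheory Filter Set Topology

noncomputable section

/-- `γ_n = γ₀ + 4 n`. -/
def rpsGamma (γ₀ : ℝ) (n : ℕ) : ℝ := γ₀ + 4 * n

/-- The increments to the (unnormalised) degrees of the three types
for each of the six possible transitions. -/
def rpsIncr : Fin 6 → ℝ × ℝ × ℝ
  | 0 => (4, 0, 0)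
  | 1 => (0, 4, 0)
  | 2 => (0, 0, 4)
  | 3 => (1, 3, 0)
  | 4 => (0, 1, 3)
  | 5 => (3, 0, 1)

/-- The conditional probability of each of the six possible transitions,
as a function of the current state `(x, y, z)`. -/
def rpsProb (i : Fin 6) (x y z : ℝ) : ℝ :=
  match i with
  | 0 => x ^ 2
  | 1 => y ^ 2
  | 2 => z ^ 2
  | 3 => 2 * x * y
  | 4 => 2 * y * z
  | 5 => 2 * z * x

/-- The rock–paper–scissors preferential attachment chain: an adapted process
`(X n, Y n, Z n)` with values in the simplex `Δ²`, deterministic strictly positive initial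
condition and, conditionally on `𝔉 n`, the six possible transitions have the prescribed
probabilities. -/
structure RPSChain {Ω : Type*} [MeasurableSpace Ω] (μ : Measure Ω) (γ₀ : ℝ) where
  F : Filtration ℕ ‹MeasurableSpace Ω›
  X : ℕ → Ω → ℝ
  Y : ℕ → Ω → ℝ
  Z : ℕ → Ω → ℝ
  adapted_X : Adapted F X
  adapted_Y : Adapted F Y
  adapted_Z : Adapted F Z
  nonneg_X : ∀ n ω, 0 ≤ X n ω
  nonneg_Y : ∀ n ω, 0 ≤ Y n ω
  nonneg_Z : ∀ n ω, 0 ≤ Z n ω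
  sum_eq_one : ∀ n ω, X n ω + Y n ω + Z n ω = 1
  init_X_pos : ∀ ω, 0 < X 0 ω
  init_Y_pos : ∀ ω, 0 < Y 0 ω
  init_Z_pos : ∀ ω, 0 < Z 0 ω
  init_X_const : ∀ ω ω', X 0 ω = X 0 ω'
  init_Y_const : ∀ ω ω', Y 0 ω = Y 0 ω'
  init_Z_const : ∀ ω ω', Z 0 ω = Z 0 ω'
  step : ∀ (n : ℕ) (i : Fin 6),
    μ[Set.indicator
        {ω | X (n+1) ω = (rpsGamma γ₀ n * X n ω + (rpsIncr i).1) / rpsGamma γ₀ (n+1) ∧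
             Y (n+1) ω = (rpsGamma γ₀ n * Y n ω + (rpsIncr i).2.1) / rpsGamma γ₀ (n+1) ∧
             Z (n+1) ω = (rpsGamma γ₀ n * Z n ω + (rpsIncr i).2.2) / rpsGamma γ₀ (n+1)}
        (fun _ => (1 : ℝ)) | F n]
      =ᵐ[μ] fun ω => rpsProb i (X n ω) (Y n ω) (Z n ω)

/-!
Write `γ = γ_n`. Whatever the transition, the next state is
`(γ x + a₁, γ y + a₂, γ z + a₃) / (γ + 4)` with `a₁ + a₂ + a₃ = 4`, so that
`(γ + 4)³ M_{n+1} = γ³ M_n + γ² (a₁ y z + a₂ z x + a₃ x y) + O(γ)`.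
Since `18 (1/27 - x y z)` dominates the squared distance from `(x, y, z)` to the centre
`(1/3, 1/3, 1/3)`, on the event `M_n > 1/27 - c / γ` that distance is `O(γ ^ (-1/2))`. There the
products `y z`, `z x`, `x y` are `1/9 + O(γ ^ (-1/2))`, so the `γ²` term is
`4/9 γ² + O(γ ^ (3/2))` for each of the transitions. Thus `M_{n+1}` lies within
`O(γ ^ (-3/2))` of an `𝔉_n`-measurable quantity, hence so does its conditional expectation.
-/

section Conditioning

variable {Ω : Type*} {m m₀ : MeasurableSpace Ω} {μ : Measure Ω} [IsFiniteMeasure μ]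

lemma ae_exists_mem_of_sum_condExp_indicator_eq_one {ι : Type*} [Fintype ι] {S : ι → Set Ω}
    (hm : m ≤ m₀) (hS : ∀ i, MeasurableSet (S i)) (hdisj : Pairwise (Function.onFun Disjoint S))
    (hsum : ∀ᵐ ω ∂μ, ∑ i, (μ[(S i).indicator (fun _ ↦ (1 : ℝ)) | m]) ω = 1) :
    ∀ᵐ ω ∂μ, ∃ i, ω ∈ S i := by
  have hreal (i : ι) : ∫ ω, (μ[(S i).indicator (fun _ ↦ (1 : ℝ)) | m]) ω ∂μ = μ.real (S i) := by
    rw [integral_condExp hm]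
    exact integral_indicator_one (hS i)
  have hunion : μ.real (⋃ i, S i) = μ.real univ := by
    calc μ.real (⋃ i, S i)
        = ∑ i, ∫ ω, (μ[(S i).indicator (fun _ ↦ (1 : ℝ)) | m]) ω ∂μ := by
          simp only [hreal]
          exact measureReal_iUnion_fintype hdisj hS
      _ = ∫ ω, ∑ i, (μ[(S i).indicator (fun _ ↦ (1 : ℝ)) | m]) ω ∂μ :=
          (integral_finsetSum _ fun _ _ ↦ integrable_condExp).symm
      _ = ∫ _, 1 ∂μ := integral_congr_ae hsum
      _ = μ.real univ := by simp
  have hmem : ∀ᵐ ω ∂μ, ω ∈ ⋃ i, S i :=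
    (ae_mem_iff_measure_eq (MeasurableSet.iUnion hS).nullMeasurableSet).2
      ((measureReal_eq_measureReal_iff).1 hunion)
  simpa only [mem_iUnion] using hmem

lemma ae_abs_sub_condExp_lt {f b : Ω → ℝ} {K : ℝ} (hm : m ≤ m₀) (hf : Integrable f μ)
    (hb : StronglyMeasurable[m] b) (hK : ∀ᵐ ω ∂μ, |f ω - b ω| < K) :
    ∀ᵐ ω ∂μ, |f ω - (μ[f | m]) ω| < 2 * K := by
  have hbi : Integrable b μ := by
    refine (hf.norm.add (integrable_const K)).mono' (hb.mono hm).aestronglyMeasurable ?_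
    filter_upwards [hK] with ω hω
    simp only [Real.norm_eq_abs, Pi.add_apply]
    linarith [abs_sub_abs_le_abs_sub (b ω) (f ω), abs_sub_comm (b ω) (f ω)]
  have hbdd : ∀ᵐ ω ∂μ, |(μ[f - b | m]) ω| ≤ K :=
    ae_bdd_abs_condExp_of_ae_bdd_abs (hK.mono fun _ hω ↦ hω.le)
  have hsub : μ[f - b | m] =ᵐ[μ] μ[f | m] - b := by
    simpa only [condExp_of_stronglyMeasurable hm hb hbi] using condExp_sub hf hbi m
  filter_upwards [hK, hbdd, hsub] with ω hfb hcond hω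
  rw [hω, Pi.sub_apply] at hcond
  rw [abs_lt] at hfb ⊢
  rw [abs_le] at hcond
  constructor <;> linarith [hfb.1, hfb.2, hcond.1, hcond.2]

lemma ae_abs_sub_condExp_lt_on {f b : Ω → ℝ} {K : ℝ} {A : Set Ω} (hm : m ≤ m₀)
    (hA : MeasurableSet[m] A) (hf : Integrable f μ) (hb : StronglyMeasurable[m] b)
    (hK : ∀ᵐ ω ∂μ, ω ∈ A → |f ω - b ω| < K) :
    ∀ᵐ ω ∂μ, ω ∈ A → |f ω - (μ[f | m]) ω| < 2 * K := by
  rw [← ae_restrict_iff' (hm _ hA)] at hK ⊢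
  filter_upwards [ae_abs_sub_condExp_lt hm hf.restrict hb hK,
    condExp_restrict_ae_eq_restrict hm hA hf] with ω hω hcond
  rwa [hcond] at hω

end Conditioning

section NearCentre

variable {x y z a₁ a₂ a₃ c g k δ : ℝ}

lemma sum_sq_sub_third_le (hx : 0 ≤ x) (hy : 0 ≤ y) (hz : 0 ≤ z) (hsum : x + y + z = 1) :
    (x - 1 / 3) ^ 2 + (y - 1 / 3) ^ 2 + (z - 1 / 3) ^ 2 ≤ 18 * (1 / 27 - x * y * z) := by
  have hgap : 0 ≤ x * (y - z) ^ 2 + y * (z - x) ^ 2 + z * (x - y) ^ 2 := by positivity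
  obtain rfl : z = 1 - x - y := by linarith
  linarith

lemma abs_sub_third_le_of_lt_mul (hx : 0 ≤ x) (hy : 0 ≤ y) (hz : 0 ≤ z) (hsum : x + y + z = 1)
    (hM : 1 / 27 - δ < x * y * z) :
    |x - 1 / 3| ≤ √(18 * δ) ∧ |y - 1 / 3| ≤ √(18 * δ) ∧ |z - 1 / 3| ≤ √(18 * δ) := by
  have hdist := sum_sq_sub_third_le hx hy hz hsum
  refine ⟨Real.abs_le_sqrt ?_, Real.abs_le_sqrt ?_, Real.abs_le_sqrt ?_⟩ <;>
    linarith [sq_nonneg (x - 1 / 3), sq_nonneg (y - 1 / 3), sq_nonneg (z - 1 / 3)]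

lemma abs_mul_sub_mul_le {u v a b : ℝ} (hu : |u| ≤ 1) (hb : |b| ≤ 1) (hua : |u - a| ≤ δ)
    (hvb : |v - b| ≤ δ) : |u * v - a * b| ≤ 2 * δ := by
  calc |u * v - a * b| = |u * (v - b) + b * (u - a)| := by ring_nf
    _ ≤ |u| * |v - b| + |b| * |u - a| := by
        simpa only [abs_mul] using abs_add_le (u * (v - b)) (b * (u - a))
    _ ≤ 1 * δ + 1 * δ := by gcongr
    _ = 2 * δ := by ring

lemma abs_linear_term_sub_le (hx : |x| ≤ 1) (hy : |y| ≤ 1) (hz : |z| ≤ 1)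
    (hxδ : |x - 1 / 3| ≤ δ) (hyδ : |y - 1 / 3| ≤ δ) (hzδ : |z - 1 / 3| ≤ δ)
    (h₁ : 0 ≤ a₁) (h₂ : 0 ≤ a₂) (h₃ : 0 ≤ a₃) :
    |a₁ * (y * z) + a₂ * (z * x) + a₃ * (x * y) - (a₁ + a₂ + a₃) / 9|
      ≤ 2 * (a₁ + a₂ + a₃) * δ := by
  have hthird : |(1 / 3 : ℝ)| ≤ 1 := by norm_num [abs_le]
  have hyz := abs_mul_sub_mul_le hy hthird hyδ hzδ
  have hzx := abs_mul_sub_mul_le hz hthird hzδ hxδ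
  have hxy := abs_mul_sub_mul_le hx hthird hxδ hyδ
  calc |a₁ * (y * z) + a₂ * (z * x) + a₃ * (x * y) - (a₁ + a₂ + a₃) / 9|
      = |a₁ * (y * z - 1 / 3 * (1 / 3)) + a₂ * (z * x - 1 / 3 * (1 / 3))
          + a₃ * (x * y - 1 / 3 * (1 / 3))| := by ring_nf
    _ ≤ a₁ * |y * z - 1 / 3 * (1 / 3)| + a₂ * |z * x - 1 / 3 * (1 / 3)|
          + a₃ * |x * y - 1 / 3 * (1 / 3)| := by
        simpa only [abs_mul, abs_of_nonneg h₁, abs_of_nonneg h₂, abs_of_nonneg h₃]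
          using abs_add_three (a₁ * (y * z - 1 / 3 * (1 / 3))) (a₂ * (z * x - 1 / 3 * (1 / 3)))
            (a₃ * (x * y - 1 / 3 * (1 / 3)))
    _ ≤ a₁ * (2 * δ) + a₂ * (2 * δ) + a₃ * (2 * δ) := by gcongr
    _ = 2 * (a₁ + a₂ + a₃) * δ := by ring

lemma abs_quadratic_term_le (hx : |x| ≤ 1) (hy : |y| ≤ 1) (hz : |z| ≤ 1)
    (h₁ : 0 ≤ a₁) (h₂ : 0 ≤ a₂) (h₃ : 0 ≤ a₃) :
    |a₂ * a₃ * x + a₃ * a₁ * y + a₁ * a₂ * z| ≤ (a₁ + a₂ + a₃) ^ 2 / 3 := by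
  calc |a₂ * a₃ * x + a₃ * a₁ * y + a₁ * a₂ * z|
      ≤ a₂ * a₃ * |x| + a₃ * a₁ * |y| + a₁ * a₂ * |z| := by
        simpa only [abs_mul, abs_of_nonneg h₁, abs_of_nonneg h₂, abs_of_nonneg h₃]
          using abs_add_three (a₂ * a₃ * x) (a₃ * a₁ * y) (a₁ * a₂ * z)
    _ ≤ a₂ * a₃ * 1 + a₃ * a₁ * 1 + a₁ * a₂ * 1 := by gcongr
    _ ≤ (a₁ + a₂ + a₃) ^ 2 / 3 := by
        linarith [sq_nonneg (a₁ - a₂), sq_nonneg (a₂ - a₃), sq_nonneg (a₃ - a₁)]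

lemma abs_mul_add_sub_le (hg : 0 ≤ g) (hx : |x| ≤ 1) (hy : |y| ≤ 1) (hz : |z| ≤ 1)
    (hxδ : |x - 1 / 3| ≤ δ) (hyδ : |y - 1 / 3| ≤ δ) (hzδ : |z - 1 / 3| ≤ δ)
    (h₁ : 0 ≤ a₁) (h₂ : 0 ≤ a₂) (h₃ : 0 ≤ a₃) (hprod : a₁ * a₂ * a₃ = 0) :
    |(g * x + a₁) * (g * y + a₂) * (g * z + a₃)
        - (g ^ 3 * (x * y * z) + (a₁ + a₂ + a₃) / 9 * g ^ 2)|
      ≤ 2 * (a₁ + a₂ + a₃) * δ * g ^ 2 + (a₁ + a₂ + a₃) ^ 2 / 3 * g := by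
  set L := a₁ * (y * z) + a₂ * (z * x) + a₃ * (x * y) - (a₁ + a₂ + a₃) / 9 with hL
  set Q := a₂ * a₃ * x + a₃ * a₁ * y + a₁ * a₂ * z with hQ
  calc |(g * x + a₁) * (g * y + a₂) * (g * z + a₃)
        - (g ^ 3 * (x * y * z) + (a₁ + a₂ + a₃) / 9 * g ^ 2)|
      = |L * g ^ 2 + Q * g| := by
        congr 1
        rw [hL, hQ]
        linear_combination hprod
    _ ≤ |L| * g ^ 2 + |Q| * g := by
        refine (abs_add_le _ _).trans_eq ?_
        rw [abs_mul, abs_mul, abs_of_nonneg hg, abs_of_nonneg (sq_nonneg g)]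
    _ ≤ 2 * (a₁ + a₂ + a₃) * δ * g ^ 2 + (a₁ + a₂ + a₃) ^ 2 / 3 * g := by
        gcongr
        · exact abs_linear_term_sub_le hx hy hz hxδ hyδ hzδ h₁ h₂ h₃
        · exact abs_quadratic_term_le hx hy hz h₁ h₂ h₃

lemma error_div_cube_lt (hg : 0 < g) (hk : 0 ≤ k) :
    (8 * (k / √g) * g ^ 2 + 16 / 3 * g) / (g + 4) ^ 3 < (8 * k + 6) / g ^ ((3 : ℝ) / 2) := by
  have hr : 0 < √g := Real.sqrt_pos.2 hg
  have hpow : g ^ ((3 : ℝ) / 2) = √g ^ 3 := by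
    rw [Real.rpow_div_two_eq_sqrt _ hg.le, Real.rpow_ofNat]
  rw [hpow]
  obtain ⟨r, hrg⟩ : ∃ r, √g = r := ⟨_, rfl⟩
  obtain rfl : g = r ^ 2 := by rw [← hrg, Real.sq_sqrt hg.le]
  rw [hrg] at hr ⊢
  have hsix : r ^ 6 ≤ (r ^ 2 + 4) ^ 3 := by
    calc r ^ 6 = (r ^ 2) ^ 3 := by ring
      _ ≤ (r ^ 2 + 4) ^ 3 := by gcongr; linarith
  have hfive : r ^ 5 ≤ (r ^ 2 + 4) ^ 3 := by
    calc r ^ 5 = r ^ 2 * r ^ 2 * r := by ring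
      _ ≤ (r ^ 2 + 4) * (r ^ 2 + 4) * (r ^ 2 + 4) := by
          gcongr
          · linarith
          · linarith
          · linarith [sq_nonneg (r - 1)]
      _ = (r ^ 2 + 4) ^ 3 := by ring
  rw [div_lt_div_iff₀ (by positivity) (by positivity)]
  calc (8 * (k / r) * (r ^ 2) ^ 2 + 16 / 3 * r ^ 2) * r ^ 3
      = 8 * k * r ^ 6 + 16 / 3 * r ^ 5 := by field_simp
    _ ≤ 8 * k * (r ^ 2 + 4) ^ 3 + 16 / 3 * (r ^ 2 + 4) ^ 3 := by gcongr
    _ < (8 * k + 6) * (r ^ 2 + 4) ^ 3 := by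
        linarith [pow_pos (by positivity : 0 < r ^ 2 + 4) 3]

/-- Prediction of `M_{n+1}` from `m = M_n` and `g = γ_n`: near the centre, each of the four
new units contributes about `1/9 = (1/3) ^ 2`, whichever coordinate it is added to. -/
def rpsPredictor (g m : ℝ) : ℝ := (g ^ 3 * m + 4 / 9 * g ^ 2) / (g + 4) ^ 3

lemma abs_step_sub_rpsPredictor_lt (hg : 0 < g) (hx : 0 ≤ x) (hy : 0 ≤ y) (hz : 0 ≤ z)
    (hsum : x + y + z = 1) (hM : 1 / 27 - c / g < x * y * z) (h₁ : 0 ≤ a₁) (h₂ : 0 ≤ a₂)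
    (h₃ : 0 ≤ a₃) (hfour : a₁ + a₂ + a₃ = 4) (hprod : a₁ * a₂ * a₃ = 0) :
    |(g * x + a₁) / (g + 4) * ((g * y + a₂) / (g + 4)) * ((g * z + a₃) / (g + 4))
        - rpsPredictor g (x * y * z)| < (8 * √(18 * c) + 6) / g ^ ((3 : ℝ) / 2) := by
  have hdist : √(18 * (c / g)) = √(18 * c) / √g := by
    rw [← mul_div_assoc, Real.sqrt_div' _ hg.le]
  obtain ⟨hxδ, hyδ, hzδ⟩ := abs_sub_third_le_of_lt_mul hx hy hz hsum hM
  have hnum := abs_mul_add_sub_le hg.le (abs_le.2 ⟨by linarith, by linarith⟩)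
    (abs_le.2 ⟨by linarith, by linarith⟩) (abs_le.2 ⟨by linarith, by linarith⟩)
    hxδ hyδ hzδ h₁ h₂ h₃ hprod
  rw [hfour, hdist] at hnum
  calc |(g * x + a₁) / (g + 4) * ((g * y + a₂) / (g + 4)) * ((g * z + a₃) / (g + 4))
        - rpsPredictor g (x * y * z)|
      = |((g * x + a₁) * (g * y + a₂) * (g * z + a₃)
          - (g ^ 3 * (x * y * z) + 4 / 9 * g ^ 2)) / (g + 4) ^ 3| := by
        rw [rpsPredictor]
        congr 1
        field_simp
    _ = |(g * x + a₁) * (g * y + a₂) * (g * z + a₃)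
          - (g ^ 3 * (x * y * z) + 4 / 9 * g ^ 2)| / (g + 4) ^ 3 := by
        rw [abs_div, abs_of_pos (by positivity : 0 < (g + 4) ^ 3)]
    _ ≤ (8 * (√(18 * c) / √g) * g ^ 2 + 16 / 3 * g) / (g + 4) ^ 3 := by
        gcongr
        exact hnum.trans_eq (by ring)
    _ < (8 * √(18 * c) + 6) / g ^ ((3 : ℝ) / 2) := error_div_cube_lt hg (Real.sqrt_nonneg _)

end NearCentre

lemma rpsGamma_succ (γ₀ : ℝ) (n : ℕ) : rpsGamma γ₀ (n + 1) = rpsGamma γ₀ n + 4 := by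
  simp only [rpsGamma, Nat.cast_add, Nat.cast_one]
  ring

lemma rpsIncr_nonneg (i : Fin 6) : 0 ≤ rpsIncr i := by
  fin_cases i <;> simp [rpsIncr, Prod.le_def]

lemma rpsIncr_sum (i : Fin 6) : (rpsIncr i).1 + (rpsIncr i).2.1 + (rpsIncr i).2.2 = 4 := by
  fin_cases i <;> norm_num [rpsIncr]

lemma rpsIncr_prod (i : Fin 6) : (rpsIncr i).1 * (rpsIncr i).2.1 * (rpsIncr i).2.2 = 0 := by
  fin_cases i <;> norm_num [rpsIncr]

lemma rpsIncr_injective : Function.Injective rpsIncr := by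
  intro i j hij
  fin_cases i <;> fin_cases j <;> first | rfl | norm_num [rpsIncr] at hij

lemma sum_rpsProb (x y z : ℝ) : ∑ i, rpsProb i x y z = (x + y + z) ^ 2 := by
  simp only [Fin.sum_univ_six, rpsProb]
  ring

namespace RPSChain

variable {Ω : Type*} [MeasurableSpace Ω] {μ : Measure Ω} {γ₀ : ℝ} (ch : RPSChain μ γ₀) (n : ℕ)

/-- The product `M_n = X_n Y_n Z_n`, which is maximal, equal to `1/27`, at the centre of the
simplex. -/
def M (ω : Ω) : ℝ := ch.X n ω * ch.Y n ω * ch.Z n ω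

/-- The event that the step from time `n` to `n + 1` adds the increments `rpsIncr i`. -/
def transition (i : Fin 6) : Set Ω :=
  {ω | ch.X (n + 1) ω = (rpsGamma γ₀ n * ch.X n ω + (rpsIncr i).1) / rpsGamma γ₀ (n + 1) ∧
    ch.Y (n + 1) ω = (rpsGamma γ₀ n * ch.Y n ω + (rpsIncr i).2.1) / rpsGamma γ₀ (n + 1) ∧
    ch.Z (n + 1) ω = (rpsGamma γ₀ n * ch.Z n ω + (rpsIncr i).2.2) / rpsGamma γ₀ (n + 1)}

lemma measurable_M : Measurable[ch.F n] (ch.M n) :=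
  ((ch.adapted_X n).mul (ch.adapted_Y n)).mul (ch.adapted_Z n)

lemma M_mem_Icc (ω : Ω) : ch.M n ω ∈ Icc 0 (1 / 27) := by
  have hx := ch.nonneg_X n ω
  have hy := ch.nonneg_Y n ω
  have hz := ch.nonneg_Z n ω
  refine ⟨by unfold M; positivity, ?_⟩
  have hdist := sum_sq_sub_third_le hx hy hz (ch.sum_eq_one n ω)
  unfold M
  linarith [sq_nonneg (ch.X n ω - 1 / 3), sq_nonneg (ch.Y n ω - 1 / 3),
    sq_nonneg (ch.Z n ω - 1 / 3)]

lemma integrable_M [IsFiniteMeasure μ] : Integrable (ch.M n) μ :=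
  Integrable.of_mem_Icc 0 (1 / 27) ((ch.measurable_M n).mono (ch.F.le n) le_rfl).aemeasurable
    (Eventually.of_forall (ch.M_mem_Icc n))

lemma measurableSet_transition (i : Fin 6) : MeasurableSet (ch.transition n i) := by
  have hX (k : ℕ) : Measurable (ch.X k) := (ch.adapted_X k).mono (ch.F.le k) le_rfl
  have hY (k : ℕ) : Measurable (ch.Y k) := (ch.adapted_Y k).mono (ch.F.le k) le_rfl
  have hZ (k : ℕ) : Measurable (ch.Z k) := (ch.adapted_Z k).mono (ch.F.le k) le_rfl
  have heq {U : ℕ → Ω → ℝ} (hU : ∀ k, Measurable (U k)) (a : ℝ) : MeasurableSet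
      {ω | U (n + 1) ω = (rpsGamma γ₀ n * U n ω + a) / rpsGamma γ₀ (n + 1)} :=
    measurableSet_eq_fun (hU _) ((((hU n).const_mul _).add_const _).div_const _)
  exact (heq hX _).inter ((heq hY _).inter (heq hZ _))

variable {n}

lemma pairwise_disjoint_transition (hγ : rpsGamma γ₀ (n + 1) ≠ 0) :
    Pairwise (Function.onFun Disjoint (ch.transition n)) := by
  refine fun i j hij ↦ Set.disjoint_left.2 ?_
  rintro ω ⟨hxi, hyi, hzi⟩ ⟨hxj, hyj, hzj⟩
  rw [hxi, div_left_inj' hγ, add_right_inj] at hxj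
  rw [hyi, div_left_inj' hγ, add_right_inj] at hyj
  rw [hzi, div_left_inj' hγ, add_right_inj] at hzj
  exact hij (rpsIncr_injective (Prod.ext hxj (Prod.ext hyj hzj)))

lemma ae_exists_mem_transition [IsFiniteMeasure μ] (hγ : rpsGamma γ₀ (n + 1) ≠ 0) :
    ∀ᵐ ω ∂μ, ∃ i, ω ∈ ch.transition n i := by
  refine ae_exists_mem_of_sum_condExp_indicator_eq_one (ch.F.le n) (ch.measurableSet_transition n)
    (ch.pairwise_disjoint_transition hγ) ?_
  filter_upwards [ae_all_iff.2 (ch.step n)] with ω hω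
  calc ∑ i, (μ[(ch.transition n i).indicator (fun _ ↦ (1 : ℝ)) | ch.F n]) ω
      = ∑ i, rpsProb i (ch.X n ω) (ch.Y n ω) (ch.Z n ω) := Finset.sum_congr rfl fun i _ ↦ hω i
    _ = 1 := by rw [sum_rpsProb, ch.sum_eq_one, one_pow]

lemma abs_M_succ_sub_rpsPredictor_lt {c : ℝ} {ω : Ω} {i : Fin 6} (hγ : 0 < rpsGamma γ₀ n)
    (hi : ω ∈ ch.transition n i) (hM : 1 / 27 - c / rpsGamma γ₀ n < ch.M n ω) :
    |ch.M (n + 1) ω - rpsPredictor (rpsGamma γ₀ n) (ch.M n ω)|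
      < (8 * √(18 * c) + 6) / rpsGamma γ₀ n ^ ((3 : ℝ) / 2) := by
  obtain ⟨hX, hY, hZ⟩ := hi
  obtain ⟨h₁, h₂, h₃⟩ := rpsIncr_nonneg i
  simpa only [M, hX, hY, hZ, rpsGamma_succ] using
    abs_step_sub_rpsPredictor_lt hγ (ch.nonneg_X n ω) (ch.nonneg_Y n ω) (ch.nonneg_Z n ω)
      (ch.sum_eq_one n ω) hM h₁ h₂ h₃ (rpsIncr_sum i) (rpsIncr_prod i)

end RPSChain

theorem rps_variation_near_centre_general {Ω : Type*} [MeasurableSpace Ω] {μ : Measure Ω}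
    [IsFiniteMeasure μ] {γ₀ : ℝ} (ch : RPSChain μ γ₀) {n : ℕ} (hγ : 0 < rpsGamma γ₀ n) (c : ℝ) :
    ∀ᵐ ω ∂μ, 1 / 27 - c / rpsGamma γ₀ n < ch.M n ω →
      |ch.M (n + 1) ω - (μ[ch.M (n + 1) | ch.F n]) ω|
        < (16 * √(18 * c) + 12) / rpsGamma γ₀ n ^ ((3 : ℝ) / 2) := by
  have hγ' : rpsGamma γ₀ (n + 1) ≠ 0 := by rw [rpsGamma_succ]; positivity
  have hevent : MeasurableSet[ch.F n] {ω | 1 / 27 - c / rpsGamma γ₀ n < ch.M n ω} :=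
    measurableSet_lt measurable_const (ch.measurable_M n)
  have hpred : Measurable[ch.F n] fun ω ↦ rpsPredictor (rpsGamma γ₀ n) (ch.M n ω) :=
    (((ch.measurable_M n).const_mul _).add_const _).div_const _
  have hconst : (16 * √(18 * c) + 12) / rpsGamma γ₀ n ^ ((3 : ℝ) / 2)
      = 2 * ((8 * √(18 * c) + 6) / rpsGamma γ₀ n ^ ((3 : ℝ) / 2)) := by ring
  rw [hconst]
  refine ae_abs_sub_condExp_lt_on (ch.F.le n) hevent (ch.integrable_M (n + 1))
    hpred.stronglyMeasurable ?_
  filter_upwards [ch.ae_exists_mem_transition hγ'] with ω ⟨i, hi⟩ hω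
  exact ch.abs_M_succ_sub_rpsPredictor_lt hγ hi hω

/-- For every `c > 0` there are `C > 0` (depending only on `c`) and `n₀` such that for all
`n ≥ n₀`, almost surely on the event `{M_n > 1/27 - c/γ_n}` one has
`|M_{n+1} - E[M_{n+1} | 𝔉_n]| < C / γ_n^{3/2}`. -/
theorem rps_variation_near_centre.{u} (γ₀ : ℝ) (hγ₀ : 2 ≤ γ₀) :
    ∀ c : ℝ, 0 < c → ∃ C : ℝ, 0 < C ∧ ∃ n₀ : ℕ,
      ∀ (Ω : Type u) (_ : MeasurableSpace Ω) (μ : Measure Ω), IsProbabilityMeasure μ →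
        ∀ ch : RPSChain μ γ₀, ∀ n ≥ n₀, ∀ᵐ ω ∂μ,
          ch.X n ω * ch.Y n ω * ch.Z n ω > 1/27 - c / rpsGamma γ₀ n →
          abs (ch.X (n+1) ω * ch.Y (n+1) ω * ch.Z (n+1) ω
              - (μ[fun ω' => ch.X (n+1) ω' * ch.Y (n+1) ω' * ch.Z (n+1) ω' | ch.F n]) ω)
            < C / (rpsGamma γ₀ n) ^ ((3 : ℝ) / 2) := by
  intro c _
  refine ⟨16 * √(18 * c) + 12, by positivity, 0, fun Ω _ μ _ ch n _ ↦ ?_⟩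
  exact rps_variation_near_centre_general ch (by unfold rpsGamma; positivity) c
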